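/- Every 2D harmonic fourth-order tensor H is invariant under the rotation by π/2: if g = [[0, −1], [1, 0]], then Σₚqrs g i p · g j q · g k r · g l s · H p q r s = H i j k l for all indices i, j, k, l. (In particular, a nonzero 2D harmonic fourth-order tensor always has at least the symmetry group D₄ of the square.) -/

import Mathlib

open Finset

noncomputable section

/-- A fourth-order tensor on `ℝ²`. -/
abbrev Tens4 := Fin 2 → Fin 2 → Fin 2 → Fin 2 → ℝ

/-- Kronecker delta on `Fin 2`. -/
def kdelta (i j : Fin 2) : ℝ := if i = j then 1 else 0

/-- The isotropic fourth-order tensor `J`. -/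
def Jten (i j k l : Fin 2) : ℝ :=
  (kdelta i k * kdelta j l + kdelta i l * kdelta j k) / 2 - kdelta i j * kdelta k l / 2

/-- A 2D elasticity tensor: minor and major index symmetries. -/
def IsElas (C : Tens4) : Prop :=
  (∀ i j k l, C i j k l = C j i k l) ∧ (∀ i j k l, C i j k l = C i j l k) ∧
    (∀ i j k l, C i j k l = C k l i j)

/-- Dilatation tensor `d(C)ᵢⱼ = Σₖ C k k i j`. -/
def dil (C : Tens4) (i j : Fin 2) : ℝ := ∑ k, C k k i j

/-- Voigt tensor `v(C)ᵢⱼ = Σₖ C k i k j`. -/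
def voigt (C : Tens4) (i j : Fin 2) : ℝ := ∑ k, C k i k j

/-- Shear modulus `μ(C)`. -/
def muC (C : Tens4) : ℝ := (2 * ∑ i, voigt C i i - ∑ i, dil C i i) / 8

/-- 2D bulk modulus `κ(C)`. -/
def kappaC (C : Tens4) : ℝ := (∑ i, dil C i i) / 4

/-- Deviatoric part `d'(C)` of the dilatation tensor. -/
def devC (C : Tens4) (i j : Fin 2) : ℝ := dil C i j - (∑ k, dil C k k) / 2 * kdelta i j

/-- Harmonic (fourth-order) part `H(C)` of the elasticity tensor. -/
def harmC (C : Tens4) (i j k l : Fin 2) : ℝ :=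
  C i j k l - 2 * muC C * Jten i j k l - kappaC C * kdelta i j * kdelta k l
    - (kdelta i j * devC C k l + devC C i j * kdelta k l) / 2

/-- A 2D harmonic fourth-order tensor: totally symmetric (invariant under all
permutations of its four indices) and traceless. -/
def IsHarmonic (H : Tens4) : Prop :=
  (∀ (σ : Equiv.Perm (Fin 4)) (v : Fin 4 → Fin 2),
      H (v (σ 0)) (v (σ 1)) (v (σ 2)) (v (σ 3)) = H (v 0) (v 1) (v 2) (v 3)) ∧
    (∀ i j : Fin 2, ∑ k, H k k i j = 0)

/-- Rotation matrix of angle `θ`. -/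
def rot (θ : ℝ) : Matrix (Fin 2) (Fin 2) ℝ :=
  !![Real.cos θ, -Real.sin θ; Real.sin θ, Real.cos θ]

/-- Action `g ⋆ C` of a `2×2` matrix `g` on a fourth-order tensor `C`. -/
def act (g : Matrix (Fin 2) (Fin 2) ℝ) (C : Tens4) (i j k l : Fin 2) : ℝ :=
  ∑ p, ∑ q, ∑ r, ∑ s, g i p * g j q * g k r * g l s * C p q r s

/-- `C` is orthotropic: in some rotated basis, the components `1112` and `1222` vanish. -/
def IsOrtho (C : Tens4) : Prop :=
  ∃ θ : ℝ, act (rot θ) C 0 0 0 1 = 0 ∧ act (rot θ) C 0 1 1 1 = 0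

/-!
Rotating a `2 × 2` matrix `A` by the quarter turn `g` gives `g A gᵀ = tr(A) 1 - Aᵀ`, which is `-Aᵀ`
when `A` is traceless. The action on a fourth-order tensor rotates the first and the second pair
of indices separately; when both pairs are traceless the two signs cancel, and only the
transposition of each pair remains.
-/

/-- The matrix of the rotation of the plane by `π/2`; its entries are `0` and `±1`, so it is
defined over any ring. -/
def quarterTurn (R : Type*) [Ring R] : Matrix (Fin 2) (Fin 2) R :=
  !![0, -1; 1, 0]

section

open Matrix

theorem quarterTurn_mul_mul_transpose {R : Type*} [Ring R] (A : Matrix (Fin 2) (Fin 2) R) :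
    quarterTurn R * A * (quarterTurn R)ᵀ = A.trace • 1 - Aᵀ := by
  ext i j
  fin_cases i <;> fin_cases j <;>
    simp [quarterTurn, mul_apply, trace_fin_two, -cons_mul]

theorem quarterTurn_mul_mul_transpose_of_trace_eq_zero {R : Type*} [Ring R]
    {A : Matrix (Fin 2) (Fin 2) R} (hA : A.trace = 0) :
    quarterTurn R * A * (quarterTurn R)ᵀ = -Aᵀ := by
  rw [quarterTurn_mul_mul_transpose, hA, zero_smul, zero_sub]

theorem act_eq_mul_mul_transpose (g : Matrix (Fin 2) (Fin 2) ℝ) (C : Tens4) (i j k l : Fin 2) :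
    act g C i j k l = (g * of (fun p q => (g * of (C p q) * gᵀ) k l) * gᵀ) i j := by
  simp only [act, mul_apply, transpose_apply, of_apply, Fin.sum_univ_two]
  ring

theorem act_quarterTurn_of_traces_eq_zero {C : Tens4} (hleft : ∀ k l, ∑ i, C i i k l = 0)
    (hright : ∀ i j, ∑ k, C i j k k = 0) (i j k l : Fin 2) :
    act (quarterTurn ℝ) C i j k l = C j i l k := by
  have rotate_right (p q : Fin 2) :
      quarterTurn ℝ * of (C p q) * (quarterTurn ℝ)ᵀ = -(of (C p q))ᵀ :=
    quarterTurn_mul_mul_transpose_of_trace_eq_zero (hright p q)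
  have trace_left : (of fun p q => -C p q l k).trace = 0 := by
    simp only [trace, diag_apply, of_apply, sum_neg_distrib, hleft, neg_zero]
  calc act (quarterTurn ℝ) C i j k l
      = (quarterTurn ℝ * of (fun p q => -C p q l k) * (quarterTurn ℝ)ᵀ) i j := by
        simp only [act_eq_mul_mul_transpose, rotate_right, Matrix.neg_apply, transpose_apply,
          of_apply]
    _ = C j i l k := by
        rw [quarterTurn_mul_mul_transpose_of_trace_eq_zero trace_left, Matrix.neg_apply,
          transpose_apply, of_apply, neg_neg]

end

theorem IsHarmonic.swap_within_pairs {H : Tens4} (hH : IsHarmonic H) (i j k l : Fin 2) :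
    H j i l k = H i j k l :=
  hH.1 ⟨![1, 0, 3, 2], ![1, 0, 3, 2], by decide, by decide⟩ ![i, j, k, l]

theorem IsHarmonic.swap_pairs {H : Tens4} (hH : IsHarmonic H) (i j k l : Fin 2) :
    H k l i j = H i j k l :=
  hH.1 ⟨![2, 3, 0, 1], ![2, 3, 0, 1], by decide, by decide⟩ ![i, j, k, l]

theorem IsHarmonic.sum_right_eq_zero {H : Tens4} (hH : IsHarmonic H) (i j : Fin 2) :
    ∑ k, H i j k k = 0 := by
  simpa only [hH.swap_pairs] using hH.2 i j

theorem harmonic_invariant_under_quarter_turn_general {C : Tens4}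
    (hswap : ∀ i j k l, C j i l k = C i j k l) (hleft : ∀ k l, ∑ i, C i i k l = 0)
    (hright : ∀ i j, ∑ k, C i j k k = 0) (i j k l : Fin 2) :
    act (quarterTurn ℝ) C i j k l = C i j k l :=
  (act_quarterTurn_of_traces_eq_zero hleft hright i j k l).trans (hswap i j k l)

/-- Every 2D harmonic fourth-order tensor is invariant under the
rotation by `π/2` (hence has at least the symmetry group `D₄` of the square). -/
theorem harmonic_invariant_under_quarter_turn (H : Tens4) (hH : IsHarmonic H) :
    ∀ i j k l,
      act (!![0, -1; 1, 0] : Matrix (Fin 2) (Fin 2) ℝ) H i j k l = H i j k l :=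
  harmonic_invariant_under_quarter_turn_general hH.swap_within_pairs hH.2 hH.sum_right_eq_zero
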